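/- Let V be a finite set equipped with a partial order ≤ and a binary relation ↠ such that R ↠ P implies P < R. Define integer square matrices L and M indexed by V as follows: L_{PP} = 1 for all P, L_{PQ} = −1 if P ↠ Q, and L_{PQ} = 0 otherwise; and suppose M satisfies M_{QQ} = 1 for all Q, M_{PQ} = 0 whenever P ≠ Q and ¬(P ≤ Q), and M_{PQ} = Σ_{R ∈ V, R ≤ Q, R ↠ P} M_{RQ} whenever P < Q. Then Lᵀ·M is the identity matrix; in particular M is invertible over ℤ, with M = (Lᵀ)⁻¹, and a matrix M satisfying these equations exists and is unique. -/

import Mathlib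

/-!
Write `N` for the `0/1` matrix of `↠`, so that `L = 1 - N`. Since `R ↠ P` forces `P < R`, every
column of a solution of `M = 1 + Nᵀ * M` is supported below its index, and the entries of this
equation are exactly the three conditions on `M`; that is, `M` satisfies them if and only if
`Lᵀ * M = 1`. The nonzero entries of `Nᵀ` lie strictly above the diagonal of the order,
so `Nᵀ` is nilpotent, `Lᵀ = 1 - Nᵀ` is a unit and there is exactly one such `M`.
-/

open Matrix

section Nilpotent

variable {V A : Type*} [Fintype V] [DecidableEq V] [Semiring A] {N : Matrix V V A}

theorem add_le_of_matrix_pow_apply_ne_zero {f : V → ℕ} (hN : ∀ i j, N i j ≠ 0 → f i < f j)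
    (k : ℕ) {i j : V} (hij : (N ^ k) i j ≠ 0) : f i + k ≤ f j := by
  induction k generalizing j with
  | zero =>
    obtain rfl : i = j := by
      by_contra hne
      exact hij (by rw [pow_zero, one_apply_ne hne])
    rfl
  | succ k ih =>
    rw [pow_succ, mul_apply] at hij
    obtain ⟨l, -, hl⟩ := Finset.exists_ne_zero_of_sum_ne_zero hij
    have hil : f i + k ≤ f l := ih (left_ne_zero_of_mul hl)
    have hlj : f l < f j := hN l j (right_ne_zero_of_mul hl)
    lia

theorem isNilpotent_matrix_of_apply_ne_zero_imp_lt [Preorder V]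
    (hN : ∀ i j, N i j ≠ 0 → i < j) : IsNilpotent N := by
  have rank_lt (i j : V) (hij : N i j ≠ 0) : (Set.Iio i).ncard < (Set.Iio j).ncard :=
    Set.ncard_lt_ncard (Set.Iio_ssubset_Iio (hN i j hij))
  refine ⟨Nat.card V + 1, ?_⟩
  ext i j
  by_contra hij
  have rank_add_le := add_le_of_matrix_pow_apply_ne_zero rank_lt _ hij
  have rank_le_card : (Set.Iio j).ncard ≤ Nat.card V := Set.ncard_le_card _
  lia

end Nilpotent

theorem sum_filter_and_eq_sum_filter_right {ι A : Type*} [AddCommMonoid A] {s : Finset ι}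
    {p q : ι → Prop} [DecidablePred p] [DecidablePred q] {f : ι → A}
    (hf : ∀ i, ¬ p i → f i = 0) : ∑ i ∈ s with p i ∧ q i, f i = ∑ i ∈ s with q i, f i := by
  rw [← Finset.filter_filter, Finset.filter_comm]
  exact Finset.sum_filter_of_ne fun i _ hi => not_imp_comm.mp (hf i) hi

/-- The `0/1` matrix of a binary relation, with rows indexed by its first argument. -/
def relationMatrix {V : Type*} (A : Type*) [Zero A] [One A] (r : V → V → Prop) [DecidableRel r] :
    Matrix V V A :=
  of fun P Q => if r P Q then 1 else 0

/-- The linear proximity matrix `ℙ_L` of the relation `lp P Q`, read `P ↠ Q`. -/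
def linearProximityMatrix {V : Type*} (A : Type*) [DecidableEq V] [Zero A] [One A] [Neg A]
    (lp : V → V → Prop) [DecidableRel lp] : Matrix V V A :=
  of fun P Q => if P = Q then 1 else if lp P Q then -1 else 0

/-- The equations defining the multiplicities `m_{PQ}` of the special `*`-simple ideals. They are
kept as a predicate on `M`, rather than solved recursively, since both existence and uniqueness of
a solution are at stake. -/
def IsMultiplicityMatrix {V A : Type*} [Fintype V] [PartialOrder V]
    [DecidableRel ((· ≤ ·) : V → V → Prop)] [AddCommMonoidWithOne A] (lp : V → V → Prop)
    [DecidableRel lp] (M : Matrix V V A) : Prop :=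
  (∀ Q, M Q Q = 1) ∧ (∀ P Q, P ≠ Q → ¬ P ≤ Q → M P Q = 0) ∧
    ∀ P Q, P < Q → M P Q = ∑ R with R ≤ Q ∧ lp R P, M R Q

section Recursion

variable {V A : Type*} {lp : V → V → Prop} [DecidableRel lp]

theorem linearProximityMatrix_eq_one_sub [DecidableEq V] [AddGroupWithOne A]
    (hlp : ∀ P, ¬ lp P P) :
    linearProximityMatrix A lp = 1 - relationMatrix A lp := by
  ext P Q
  rcases eq_or_ne P Q with rfl | hPQ
  · simp [linearProximityMatrix, relationMatrix, hlp]
  · by_cases hlpPQ : lp P Q <;> simp [linearProximityMatrix, relationMatrix, hPQ, hlpPQ]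

theorem transpose_relationMatrix_mul_apply [Fintype V] [NonAssocSemiring A] (M : Matrix V V A)
    (P Q : V) : ((relationMatrix A lp)ᵀ * M) P Q = ∑ R with lp R P, M R Q := by
  simp [mul_apply, relationMatrix, Finset.sum_filter]

theorem eq_one_add_transpose_relationMatrix_mul_iff [Fintype V] [DecidableEq V]
    [NonAssocSemiring A] {M : Matrix V V A} :
    M = 1 + (relationMatrix A lp)ᵀ * M ↔
      ∀ P Q, M P Q = (1 : Matrix V V A) P Q + ∑ R with lp R P, M R Q := by
  simp only [← Matrix.ext_iff, Matrix.add_apply, transpose_relationMatrix_mul_apply]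

theorem isUnit_transpose_linearProximityMatrix [Fintype V] [DecidableEq V] [Preorder V] [Ring A]
    (hlp : ∀ R P, lp R P → P < R) : IsUnit (linearProximityMatrix A lp)ᵀ := by
  have nilpotent : IsNilpotent (relationMatrix A lp)ᵀ :=
    isNilpotent_matrix_of_apply_ne_zero_imp_lt fun P R hPR => hlp R P <| by
      by_contra hRP
      exact hPR (if_neg hRP)
  rw [linearProximityMatrix_eq_one_sub fun P hP => (hlp P P hP).false, transpose_sub,
    transpose_one]
  exact nilpotent.isUnit_one_sub

theorem apply_eq_zero_of_eq_one_add_sum_of_not_le [Fintype V] [DecidableEq V] [Preorder V]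
    [AddCommMonoidWithOne A] (hlp : ∀ R P, lp R P → P < R) {M : Matrix V V A}
    (hM : ∀ P Q, M P Q = (1 : Matrix V V A) P Q + ∑ R with lp R P, M R Q)
    {P Q : V} (hPQ : ¬ P ≤ Q) : M P Q = 0 := by
  induction P using WellFoundedGT.induction with
  | ind P ih =>
    have sum_eq_zero : ∑ R with lp R P, M R Q = 0 :=
      Finset.sum_eq_zero fun R hR =>
        have hPR : P < R := hlp R P (Finset.mem_filter.mp hR).2
        ih R hPR fun hRQ => hPQ (hPR.le.trans hRQ)
    rw [hM, sum_eq_zero, one_apply_ne fun hEq => hPQ hEq.le, add_zero]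

theorem sum_filter_le_and_eq_zero_of_not_lt [Fintype V] [Preorder V]
    [DecidableRel ((· ≤ ·) : V → V → Prop)] [AddCommMonoid A] (hlp : ∀ R P, lp R P → P < R)
    (f : V → A) {P Q : V} (hPQ : ¬ P < Q) : ∑ R with R ≤ Q ∧ lp R P, f R = 0 := by
  refine Finset.sum_eq_zero fun R hR => absurd ?_ hPQ
  obtain ⟨hRQ, hRP⟩ := (Finset.mem_filter.mp hR).2
  exact (hlp R P hRP).trans_le hRQ

variable [Fintype V] [PartialOrder V] [DecidableRel ((· ≤ ·) : V → V → Prop)]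

theorem isMultiplicityMatrix_iff_eq_one_add [DecidableEq V] [NonAssocSemiring A]
    (hlp : ∀ R P, lp R P → P < R) {M : Matrix V V A} :
    IsMultiplicityMatrix lp M ↔ M = 1 + (relationMatrix A lp)ᵀ * M := by
  rw [eq_one_add_transpose_relationMatrix_mul_iff]
  constructor
  · rintro ⟨diag, eq_zero, recursion⟩ P Q
    rw [← sum_filter_and_eq_sum_filter_right
      fun R hRQ => eq_zero R Q (fun hEq => hRQ hEq.le) hRQ]
    by_cases hlt : P < Q
    · rw [one_apply_ne hlt.ne, zero_add, recursion P Q hlt]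
    rw [sum_filter_le_and_eq_zero_of_not_lt hlp _ hlt, add_zero]
    rcases eq_or_ne P Q with rfl | hne
    · rw [diag, one_apply_eq]
    · rw [one_apply_ne hne, eq_zero P Q hne fun hle => hlt (hle.lt_of_ne hne)]
  · intro hM
    have eq_zero {P Q : V} (hPQ : ¬ P ≤ Q) : M P Q = 0 :=
      apply_eq_zero_of_eq_one_add_sum_of_not_le hlp hM hPQ
    have entry (P Q : V) :
        M P Q = (1 : Matrix V V A) P Q + ∑ R with R ≤ Q ∧ lp R P, M R Q := by
      rw [sum_filter_and_eq_sum_filter_right fun R => eq_zero, ← hM]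
    refine ⟨fun Q => ?_, fun P Q _ => eq_zero, fun P Q hlt => ?_⟩
    · rw [entry, one_apply_eq, sum_filter_le_and_eq_zero_of_not_lt hlp _ (lt_irrefl Q), add_zero]
    · rw [entry, one_apply_ne hlt.ne, zero_add]

theorem isMultiplicityMatrix_iff_transpose_linearProximityMatrix_mul_eq_one [DecidableEq V]
    [NonAssocRing A] (hlp : ∀ R P, lp R P → P < R) {M : Matrix V V A} :
    IsMultiplicityMatrix lp M ↔ (linearProximityMatrix A lp)ᵀ * M = 1 := by
  rw [isMultiplicityMatrix_iff_eq_one_add hlp,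
    linearProximityMatrix_eq_one_sub fun P hP => (hlp P P hP).false, transpose_sub,
    transpose_one, sub_mul, one_mul, sub_eq_iff_eq_add]

theorem existsUnique_isMultiplicityMatrix [Ring A] (hlp : ∀ R P, lp R P → P < R) :
    ∃! M : Matrix V V A, IsMultiplicityMatrix lp M := by
  classical
  simp only [isMultiplicityMatrix_iff_transpose_linearProximityMatrix_mul_eq_one hlp]
  exact (IsUnit.isUnit_iff_mulLeft_bijective.mp
    (isUnit_transpose_linearProximityMatrix hlp)).existsUnique 1

end Recursion

theorem linear_proximity_matrix_inverse_general
    {V A : Type*} [Fintype V] [DecidableEq V] [PartialOrder V]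
    [DecidableRel ((· ≤ ·) : V → V → Prop)] [CommRing A]
    (lp : V → V → Prop) [DecidableRel lp] (hlp : ∀ R P, lp R P → P < R)
    (L : Matrix V V A)
    (hL : ∀ P Q, L P Q = if P = Q then 1 else if lp P Q then -1 else 0) :
    (∀ M, IsMultiplicityMatrix lp M → Lᵀ * M = 1 ∧ M * Lᵀ = 1 ∧ M = Lᵀ⁻¹) ∧
      ∃! M : Matrix V V A, IsMultiplicityMatrix lp M := by
  obtain rfl : L = linearProximityMatrix A lp := Matrix.ext hL
  refine ⟨fun M hM => ?_, existsUnique_isMultiplicityMatrix hlp⟩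
  have transpose_mul :=
    (isMultiplicityMatrix_iff_transpose_linearProximityMatrix_mul_eq_one hlp).mp hM
  exact ⟨transpose_mul, mul_eq_one_comm.mp transpose_mul, (inv_eq_right_inv transpose_mul).symm⟩

/-- Let `V` be a finite set with a partial order `≤` and a binary
relation `↠` (`lp`) such that `R ↠ P` implies `P < R`.  Let `L` be the linear proximity
matrix (`L P P = 1`, `L P Q = -1` if `P ↠ Q`, `0` otherwise) and let `M` satisfy
`M Q Q = 1`, `M P Q = 0` if `P ≠ Q` and `¬ P ≤ Q`, and
`M P Q = ∑_{R ≤ Q, R ↠ P} M R Q` if `P < Q`.  Then `Lᵀ · M = 1`; in particular `M` is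
invertible over `ℤ` with `M = (Lᵀ)⁻¹`, and a matrix `M` satisfying these equations exists
and is unique. -/
theorem linear_proximity_matrix_inverse
    {V : Type} [Fintype V] [DecidableEq V] [PartialOrder V]
    [DecidableRel ((· ≤ ·) : V → V → Prop)]
    (lp : V → V → Prop) [DecidableRel lp] (hlp : ∀ R P, lp R P → P < R)
    (L M : Matrix V V ℤ)
    (hL : ∀ P Q, L P Q = if P = Q then 1 else if lp P Q then -1 else 0)
    (hMdiag : ∀ Q, M Q Q = 1)
    (hMzero : ∀ P Q, P ≠ Q → ¬ P ≤ Q → M P Q = 0)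
    (hMrec : ∀ P Q, P < Q →
      M P Q = ∑ R ∈ Finset.univ.filter (fun R => R ≤ Q ∧ lp R P), M R Q) :
    L.transpose * M = 1 ∧ M * L.transpose = 1 ∧ M = (L.transpose)⁻¹ ∧
      (∃! M' : Matrix V V ℤ,
        (∀ Q, M' Q Q = 1) ∧ (∀ P Q, P ≠ Q → ¬ P ≤ Q → M' P Q = 0) ∧
        ∀ P Q, P < Q →
          M' P Q = ∑ R ∈ Finset.univ.filter (fun R => R ≤ Q ∧ lp R P), M' R Q) := by
  obtain ⟨inverse, existsUnique⟩ := linear_proximity_matrix_inverse_general lp hlp L hL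
  exact (inverse M ⟨hMdiag, hMzero, hMrec⟩).imp_right fun h => ⟨h.1, h.2, existsUnique⟩
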